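/- Sequential time derivatives of the subdiffusion solution: let 0 < α < 1 and u(x,t) = sin(x) · E_α(−t^α). Then for every n ≥ 1, every x ∈ [0,π], and every t > 0, the n-fold Miller-Ross sequential Caputo time derivative satisfies D_t^{nα} u(x,t) = (−1)^n sin(x) · E_α(−t^α) = ∂^{2n} u(x,t)/∂x^{2n}; in particular its limit as t → 0⁺ equals (−1)^n sin(x). -/

import Mathlib

/-!
The function `s ↦ E_α(-s^α)` is an eigenfunction of the Caputo derivative with eigenvalue `-1`
(`caputo_eq`), so each composition only contributes a sign (`millerRoss_eq`), exactly as two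
derivatives in `x` do for `sin x`. The limit at `0⁺` is then continuity of `E_α` together with
`E_α(0) = 1`.

For the eigenfunction property, `E_α(-s^α)` is differentiated term by term for `s > 0`, and the
resulting series is integrated term by term against `(t - s)^(-α)`. Each integral is a Beta
integral, `∫₀ᵗ s^(α(n+1)-1) (t-s)^(-α) ds = t^(αn) Γ(α(n+1)) Γ(1-α) / Γ(αn+1)`, which turns the
`(n+1)`-st term of the Mittag-Leffler series into minus the `n`-th. Both interchanges follow from
absolute convergence of the Mittag-Leffler series everywhere, a consequence of the bound
`R^s e^(-R) ≤ Γ(s+1)` for every `R > 0`.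
-/

open Real MeasureTheory Filter

/-- The Caputo fractional derivative of order `α` of `y : ℝ → ℝ`. -/
noncomputable def caputo (α : ℝ) (y : ℝ → ℝ) (x : ℝ) : ℝ :=
  (1 / Real.Gamma (1 - α)) * ∫ ξ in (0:ℝ)..x, deriv y ξ * (x - ξ) ^ (-α)

/-- The Miller-Ross sequential fractional derivative `D^{nα}`: the `n`-fold
composition of the Caputo derivative `D^α` with itself. -/
noncomputable def millerRoss (α : ℝ) (n : ℕ) (y : ℝ → ℝ) : ℝ → ℝ :=
  (caputo α)^[n] y

/-- The one-parameter Mittag-Leffler function `E_α(x) = ∑ x^n/Γ(αn+1)`. -/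
noncomputable def mittagLeffler (α x : ℝ) : ℝ :=
  ∑' n : ℕ, x ^ n / Real.Gamma (α * n + 1)

/-- Truncating Euler's integral at `R` bounds `Γ` from below; letting `R` be large makes the
Mittag-Leffler coefficients decay faster than any geometric sequence. -/
lemma rpow_mul_exp_neg_le_Gamma {s R : ℝ} (hs : 0 ≤ s) (hR : 0 < R) :
    R ^ s * Real.exp (-R) ≤ Real.Gamma (s + 1) := by
  have hint := Real.GammaIntegral_convergent (s := s + 1) (by linarith)
  have hsub : Set.Ioi R ⊆ Set.Ioi 0 := Set.Ioi_subset_Ioi hR.le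
  rw [Real.Gamma_eq_integral (by linarith), ← integral_exp_neg_Ioi R, ← integral_const_mul]
  calc ∫ x in Set.Ioi R, R ^ s * Real.exp (-x)
      ≤ ∫ x in Set.Ioi R, Real.exp (-x) * x ^ (s + 1 - 1) := by
        refine setIntegral_mono_on ?_ (hint.mono_set hsub) measurableSet_Ioi ?_
        · exact (integrableOn_exp_neg_Ioi R).const_mul _
        · intro x hx
          rw [mul_comm, add_sub_cancel_right]
          exact mul_le_mul_of_nonneg_left (Real.rpow_le_rpow hR.le (le_of_lt hx) hs)
            (Real.exp_pos _).le
    _ ≤ ∫ x in Set.Ioi 0, Real.exp (-x) * x ^ (s + 1 - 1) := by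
        refine setIntegral_mono_set hint ?_ hsub.eventuallyLE
        filter_upwards [ae_restrict_mem measurableSet_Ioi] with x hx
        have : (0:ℝ) < x := hx
        positivity

lemma summable_mittagLeffler {α : ℝ} (hα : 0 < α) (x : ℝ) :
    Summable fun n : ℕ => x ^ n / Real.Gamma (α * n + 1) := by
  -- The cut-off `R` is chosen so that `R ^ α = 2 (|x| + 1)`.
  set R : ℝ := (2 * (|x| + 1)) ^ α⁻¹ with hRdef
  have hR : 0 < R := by positivity
  have hRα : R ^ α = 2 * (|x| + 1) := Real.rpow_inv_rpow (by positivity) hα.ne'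
  refine Summable.of_norm_bounded (g := fun n : ℕ => Real.exp R * (1 / 2) ^ n)
    (summable_geometric_two.mul_left _) fun n => ?_
  have hG := rpow_mul_exp_neg_le_Gamma (s := α * n) (by positivity) hR
  have hGpos : 0 < Real.Gamma (α * n + 1) := Real.Gamma_pos_of_pos (by positivity)
  rw [Real.rpow_mul hR.le, Real.rpow_natCast, hRα, mul_pow] at hG
  rw [norm_div, norm_pow, Real.norm_eq_abs, Real.norm_of_nonneg hGpos.le, div_le_iff₀ hGpos]
  calc |x| ^ n ≤ (|x| + 1) ^ n := by gcongr; linarith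
    _ = Real.exp R * (1 / 2) ^ n * (2 ^ n * (|x| + 1) ^ n * Real.exp (-R)) := by
        rw [Real.exp_neg, one_div, inv_pow]
        field_simp
    _ ≤ _ := by gcongr

lemma hasDerivAt_mittagLeffler {α : ℝ} (hα : 0 < α) (x : ℝ) :
    HasDerivAt (mittagLeffler α)
      (∑' n : ℕ, (n * x ^ (n - 1)) / Real.Gamma (α * n + 1)) x := by
  set R : ℝ := |x| + 1
  have hR : 1 ≤ R := by simp [R]
  refine hasDerivAt_tsum_of_isPreconnected (t := Metric.ball (0:ℝ) R) (y₀ := 0)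
    (u := fun n : ℕ => (2 * R) ^ n / Real.Gamma (α * n + 1))
    (g := fun (n : ℕ) (y : ℝ) => y ^ n / Real.Gamma (α * n + 1))
    (g' := fun (n : ℕ) (y : ℝ) => (n * y ^ (n - 1)) / Real.Gamma (α * n + 1))
    (summable_mittagLeffler hα _) Metric.isOpen_ball (convex_ball _ _).isPreconnected
    (fun n y _ => (hasDerivAt_pow n y).div_const _) (fun n y hy => ?_)
    (Metric.mem_ball_self (by linarith)) (summable_mittagLeffler hα _) (by simp [R])
  have hGpos : 0 < Real.Gamma (α * n + 1) := Real.Gamma_pos_of_pos (by positivity)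
  have hy' : |y| ≤ R := by simpa using (Metric.mem_ball.1 hy).le
  rw [norm_div, norm_mul, norm_pow, Real.norm_of_nonneg hGpos.le, Real.norm_natCast,
    Real.norm_eq_abs, mul_pow]
  have h2 : (n : ℝ) ≤ 2 ^ n := by exact_mod_cast Nat.lt_two_pow_self.le
  have h3 : |y| ^ (n - 1) ≤ R ^ n :=
    (pow_le_pow_left₀ (abs_nonneg y) hy' _).trans (pow_le_pow_right₀ hR (Nat.sub_le n 1))
  gcongr

lemma mittagLeffler_zero (α : ℝ) : mittagLeffler α 0 = 1 := by
  unfold mittagLeffler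
  rw [tsum_eq_single 0]
  · simp
  · intro n hn
    simp [hn]

/-- The `n`-th term of the termwise time derivative of `E_α(-s^α)`. Indexing starts from the
derivative of the linear term, the constant term having dropped out. -/
noncomputable def relaxTerm (α : ℝ) (n : ℕ) (s : ℝ) : ℝ :=
  (-1) ^ (n + 1) / Real.Gamma (α * (n + 1)) * s ^ (α * (n + 1) - 1)

lemma hasDerivAt_relax {α : ℝ} (hα : 0 < α) {s : ℝ} (hs : 0 < s) :
    HasDerivAt (fun s : ℝ => mittagLeffler α (-s ^ α)) (∑' n, relaxTerm α n s) s := by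
  have h1 : HasDerivAt (fun s : ℝ => -s ^ α) (-(α * s ^ (α - 1))) s :=
    (Real.hasDerivAt_rpow_const (Or.inl hs.ne')).neg
  convert! (hasDerivAt_mittagLeffler hα (-s ^ α)).comp s h1 using 1
  rw [← tsum_mul_right]
  -- The `0`-th term vanishes, so the series may be shifted by one.
  have hinj : Function.Injective (fun n : ℕ => n + 1) := add_left_injective 1
  rw [eq_comm, ← hinj.tsum_eq]
  · refine tsum_congr fun n => ?_
    have hpos : 0 < α * ((n:ℝ) + 1) := by positivity
    have hG := Real.Gamma_pos_of_pos hpos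
    have hp : s ^ (α * ((n:ℝ) + 1) - 1) = (s ^ α) ^ n * s ^ (α - 1) := by
      rw [← Real.rpow_natCast, ← Real.rpow_mul hs.le, ← Real.rpow_add hs]
      ring_nf
    simp only [relaxTerm]
    push_cast
    rw [Real.Gamma_add_one hpos.ne', hp, neg_pow (s ^ α), pow_succ (-1 : ℝ)]
    field_simp
  · intro n hn
    cases n with
    | zero => simp at hn
    | succ k => exact ⟨k, rfl⟩

/-- Euler's Beta integral over `[0, a]`, for real exponents. -/
lemma integral_rpow_mul_rpow {p q a : ℝ} (hp : 0 < p) (hq : 0 < q) (ha : 0 < a) :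
    ∫ x in (0:ℝ)..a, x ^ (p - 1) * (a - x) ^ (q - 1)
      = a ^ (p + q - 1) * (Real.Gamma p * Real.Gamma q / Real.Gamma (p + q)) := by
  have h := Complex.betaIntegral_scaled p q ha
  have hB : Complex.betaIntegral p q
      = ((Real.Gamma p * Real.Gamma q / Real.Gamma (p + q) : ℝ) : ℂ) := by
    have hne : Complex.Gamma ((p:ℂ) + q) ≠ 0 := by
      rw [← Complex.ofReal_add, Complex.Gamma_ofReal]
      exact_mod_cast (Real.Gamma_pos_of_pos (add_pos hp hq)).ne'
    have := Complex.Gamma_mul_Gamma_eq_betaIntegral (s := p) (t := q) (by simpa) (by simpa)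
    rw [eq_div_of_mul_eq hne (this.trans (mul_comm _ _)).symm]
    push_cast [← Complex.Gamma_ofReal]
    rfl
  rw [hB] at h
  have hR : ((a:ℂ)) ^ ((p:ℂ) + q - 1) = ((a ^ (p + q - 1) : ℝ) : ℂ) := by
    rw [Complex.ofReal_cpow ha.le]; push_cast; rfl
  rw [hR, ← Complex.ofReal_mul] at h
  apply Complex.ofReal_injective
  rw [← h, ← intervalIntegral.integral_ofReal]
  refine intervalIntegral.integral_congr fun x hx => ?_
  rw [Set.uIcc_of_le ha.le] at hx
  rw [Complex.ofReal_mul, Complex.ofReal_cpow hx.1, Complex.ofReal_cpow (sub_nonneg.2 hx.2)]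
  push_cast
  rfl

/-- A non-integrable function would have integral `0`, whereas the Beta integral is positive. -/
lemma intervalIntegrable_rpow_mul_rpow {p q a : ℝ} (hp : 0 < p) (hq : 0 < q) (ha : 0 < a) :
    IntervalIntegrable (fun x : ℝ => x ^ (p - 1) * (a - x) ^ (q - 1)) volume 0 a := by
  by_contra hcon
  have h := integral_rpow_mul_rpow hp hq ha
  rw [intervalIntegral.integral_undef hcon] at h
  have h1 := Real.Gamma_pos_of_pos hp
  have h2 := Real.Gamma_pos_of_pos hq
  have h3 := Real.Gamma_pos_of_pos (add_pos hp hq)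
  have : 0 < a ^ (p + q - 1) * (Real.Gamma p * Real.Gamma q / Real.Gamma (p + q)) := by
    positivity
  exact this.ne h

/-- The Caputo derivative sees `y` only on `(0, t)`, where `c * E_α(-s^α)` is an eigenfunction
with eigenvalue `-1`. -/
lemma caputo_eq {α : ℝ} (hα0 : 0 < α) (hα1 : α < 1) (y : ℝ → ℝ) (c : ℝ)
    (hy : ∀ s, 0 < s → y s = c * mittagLeffler α (-s ^ α)) {t : ℝ} (ht : 0 < t) :
    caputo α y t = -c * mittagLeffler α (-t ^ α) := by
  have hq : 0 < 1 - α := by linarith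
  have hGq := Real.Gamma_pos_of_pos hq
  have hderiv : ∀ s, 0 < s → deriv y s = c * ∑' n, relaxTerm α n s := fun s hs => by
    refine HasDerivAt.deriv ?_
    refine ((hasDerivAt_relax hα0 hs).const_mul c).congr_of_eventuallyEq ?_
    filter_upwards [lt_mem_nhds hs] with r hr using hy r hr
  have hqe : -α = (1 - α) - 1 := by ring
  have hint : ∀ n : ℕ, IntegrableOn
      (fun ξ : ℝ => ξ ^ (α * ((n:ℝ) + 1) - 1) * (t - ξ) ^ (-α)) (Set.Ioc 0 t) := fun n => by
    rw [← intervalIntegrable_iff_integrableOn_Ioc_of_le ht.le, hqe]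
    exact intervalIntegrable_rpow_mul_rpow (by positivity) hq ht
  have hval : ∀ n : ℕ, ∫ ξ in Set.Ioc 0 t, ξ ^ (α * ((n:ℝ) + 1) - 1) * (t - ξ) ^ (-α)
      = (t ^ α) ^ n * (Real.Gamma (α * (n + 1)) * Real.Gamma (1 - α)
          / Real.Gamma (α * n + 1)) := fun n => by
    rw [← intervalIntegral.integral_of_le ht.le, hqe,
      integral_rpow_mul_rpow (by positivity) hq ht, ← Real.rpow_natCast, ← Real.rpow_mul ht.le]
    ring_nf
  have hsum := hasSum_integral_of_summable_integral_norm (μ := volume.restrict (Set.Ioc 0 t))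
    (F := fun (n : ℕ) (ξ : ℝ) => relaxTerm α n ξ * (t - ξ) ^ (-α)) ?_ ?_
  · have hterm : ∀ n : ℕ, ∫ ξ in Set.Ioc 0 t, relaxTerm α n ξ * (t - ξ) ^ (-α)
        = -Real.Gamma (1 - α) * ((-t ^ α) ^ n / Real.Gamma (α * n + 1)) := fun n => by
      have h1 : 0 < Real.Gamma (α * ((n:ℝ) + 1)) := Real.Gamma_pos_of_pos (by positivity)
      simp only [relaxTerm, mul_assoc]
      rw [integral_const_mul, hval, neg_pow (t ^ α), pow_succ (-1 : ℝ)]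
      field_simp
    simp only [hterm] at hsum
    have hE := hsum.tsum_eq
    rw [tsum_mul_left] at hE
    unfold caputo
    have hcongr : ∫ ξ in (0:ℝ)..t, deriv y ξ * (t - ξ) ^ (-α)
        = c * ∫ ξ in Set.Ioc 0 t, ∑' n, relaxTerm α n ξ * (t - ξ) ^ (-α) := by
      rw [intervalIntegral.integral_of_le ht.le, ← integral_const_mul]
      refine setIntegral_congr_fun measurableSet_Ioc fun ξ hξ => ?_
      rw [hderiv ξ hξ.1, tsum_mul_right, mul_assoc]
    rw [hcongr, ← hE, mittagLeffler]
    field_simp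
  · intro n
    simp only [relaxTerm, mul_assoc]
    exact (hint n).const_mul _
  · have hterm : ∀ n : ℕ, ∫ ξ in Set.Ioc 0 t, ‖relaxTerm α n ξ * (t - ξ) ^ (-α)‖
        = Real.Gamma (1 - α) * ((t ^ α) ^ n / Real.Gamma (α * n + 1)) := fun n => by
      have h1 : 0 < Real.Gamma (α * ((n:ℝ) + 1)) := Real.Gamma_pos_of_pos (by positivity)
      have : ∫ ξ in Set.Ioc 0 t, ‖relaxTerm α n ξ * (t - ξ) ^ (-α)‖
          = ∫ ξ in Set.Ioc 0 t, (Real.Gamma (α * ((n:ℝ) + 1)))⁻¹ *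
              (ξ ^ (α * ((n:ℝ) + 1) - 1) * (t - ξ) ^ (-α)) := by
        refine setIntegral_congr_fun measurableSet_Ioc fun ξ hξ => ?_
        simp only [relaxTerm]
        rw [norm_mul, norm_mul, norm_div, norm_pow, norm_neg, norm_one, one_pow,
          Real.norm_of_nonneg h1.le, Real.norm_of_nonneg (Real.rpow_nonneg hξ.1.le _),
          Real.norm_of_nonneg (Real.rpow_nonneg (sub_nonneg.2 hξ.2) _), one_div, mul_assoc]
      rw [this, integral_const_mul, hval]
      field_simp
    simp only [hterm]
    exact (summable_mittagLeffler hα0 _).mul_left _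

lemma millerRoss_eq {α : ℝ} (hα0 : 0 < α) (hα1 : α < 1) (y : ℝ → ℝ) (c : ℝ)
    (hy : ∀ s, 0 < s → y s = c * mittagLeffler α (-s ^ α)) (n : ℕ) :
    ∀ t, 0 < t → millerRoss α n y t = (-1) ^ n * c * mittagLeffler α (-t ^ α) := by
  induction n with
  | zero => simpa [millerRoss] using hy
  | succ n ih =>
    intro t ht
    have h := caputo_eq hα0 hα1 (millerRoss α n y) _ ih ht
    rw [millerRoss, Function.iterate_succ_apply']
    rw [millerRoss] at h
    rw [h, pow_succ]
    ring

/-- Sequential time derivatives of the subdiffusion solution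
`u(x,t) = sin(x) E_α(−t^α)`: for `n ≥ 1`, `x ∈ [0,π]` and `t > 0`,
`D_t^{nα} u(x,t) = (−1)^n sin(x) E_α(−t^α) = ∂^{2n}u/∂x^{2n}`, with limit
`(−1)^n sin(x)` as `t → 0⁺`. -/
theorem millerRoss_subdiffusion_solution (α : ℝ) (hα0 : 0 < α) (hα1 : α < 1)
    (u : ℝ → ℝ → ℝ)
    (hu : ∀ x t : ℝ, u x t = Real.sin x * mittagLeffler α (-t ^ α)) :
    ∀ n : ℕ, 1 ≤ n → ∀ x ∈ Set.Icc (0:ℝ) π,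
      (∀ t : ℝ, 0 < t →
        millerRoss α n (fun s => u x s) t
            = (-1) ^ n * Real.sin x * mittagLeffler α (-t ^ α) ∧
        millerRoss α n (fun s => u x s) t
            = iteratedDeriv (2 * n) (fun ξ => u ξ t) x) ∧
      Tendsto (millerRoss α n (fun s => u x s))
        (nhdsWithin 0 (Set.Ioi 0)) (nhds ((-1) ^ n * Real.sin x)) := by
  intro n hn x _
  have key : ∀ t : ℝ, 0 < t → millerRoss α n (fun s => u x s) t
      = (-1) ^ n * Real.sin x * mittagLeffler α (-t ^ α) :=
    millerRoss_eq hα0 hα1 _ (Real.sin x) (fun t _ => hu x t) n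
  refine ⟨fun t ht => ⟨key t ht, ?_⟩, ?_⟩
  · rw [key t ht]
    simp_rw [hu]
    rw [iteratedDeriv_mul_const_field, Real.iteratedDeriv_even_sin]
    simp
  · have h1 : Tendsto (fun t : ℝ => (-1) ^ n * Real.sin x * mittagLeffler α (-t ^ α))
        (nhdsWithin 0 (Set.Ioi 0)) (nhds ((-1) ^ n * Real.sin x * 1)) := by
      refine Tendsto.const_mul _ ?_
      have hc : ContinuousAt (fun t : ℝ => mittagLeffler α (-t ^ α)) 0 := by
        refine ContinuousAt.comp (f := fun t : ℝ => -t ^ α) (g := mittagLeffler α)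
          (hasDerivAt_mittagLeffler hα0 _).continuousAt ?_
        exact (Real.continuousAt_rpow_const 0 α (Or.inr hα0.le)).neg
      have := hc.tendsto
      simp only [Real.zero_rpow hα0.ne', neg_zero, mittagLeffler_zero] at this
      exact this.mono_left nhdsWithin_le_nhds
    rw [mul_one] at h1
    refine h1.congr' ?_
    filter_upwards [self_mem_nhdsWithin] with t ht
    exact (key t ht).symm
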